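/- arXiv:1511.07579 — 5 statements merged into one kernel-verified Lean document; each statement's English description precedes it below -/
import Mathlib

section
/- For every x = (x₀, x₁, x₂, x₃) ∈ ℝ⁴, the 2×2 matrix γ(x) := [[0, σi·x₀·1 + x₁I + i·x₂J + x₃K], [−σi·x₀·1 + x₁I + i·x₂J + x₃K, 0]] with entries in ℍ^{𝒜_ℂ} satisfies γ(x)² = −(−x₀² + x₁² − x₂² + x₃²)·Id₂, i.e. γ is a Clifford map for the quadratic form of signature (2,2) on ℝ⁴. -/
noncomputable section

/-! ### The algebra `𝒜` of Lorentz (split-complex) numbers.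

We realize `𝒜` (the real algebra with basis `{1, σ}`, `σ² = 1`) in split coordinates:
`(x, y) : ℝ × ℝ` represents `u + σ v` with `x = u + v`, `y = u - v`.  Multiplication is then
componentwise, `1 = (1,1)`, and `σ = (1, -1)` satisfies `σ² = 1`. -/

abbrev LorentzA : Type := ℝ × ℝ

/-- The element `σ ∈ 𝒜`, with `σ² = 1`, `σ ∉ ℝ·1`. -/
def sA : LorentzA := (1, -1)

/-- The element `u + σ v` of `𝒜`. -/
def mkA (u v : ℝ) : LorentzA := (u + v, u - v)

/-- The inclusion `ℝ ⊆ 𝒜`, `t ↦ t·1`. -/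
def toA (t : ℝ) : LorentzA := (t, t)

/-- Conjugation of `𝒜`: `u + σ v ↦ u - σ v` (the swap, in split coordinates). -/
def conjA (a : LorentzA) : LorentzA := (a.2, a.1)

/-- `|a|² := a·â = u² - v²`, as a real number (so that `a * conjA a = toA (nsqA a)`). -/
def nsqA (a : LorentzA) : ℝ := a.1 * a.2

/-- The real part of `a = u + σ v ∈ 𝒜`, namely `u`. -/
def ReA (a : LorentzA) : ℝ := (a.1 + a.2) / 2

/-- The imaginary part of `a = u + σ v ∈ 𝒜`, namely `v`. -/
def ImA (a : LorentzA) : ℝ := (a.1 - a.2) / 2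

/-- The idempotent `(1 + σ)/2` of `𝒜`. -/
def eP : LorentzA := (1 + sA) / 2

/-- The idempotent `(1 - σ)/2` of `𝒜`. -/
def eM : LorentzA := (1 - sA) / 2

/-! ### Derivatives of maps `ℝ² → 𝒜` and `ℝ² → ℝ`. -/

/-- `∂_u f`. -/
def duA (f : ℝ × ℝ → LorentzA) (x : ℝ × ℝ) : LorentzA := fderiv ℝ f x (1, 0)

/-- `∂_v f`. -/
def dvA (f : ℝ × ℝ → LorentzA) (x : ℝ × ℝ) : LorentzA := fderiv ℝ f x (0, 1)

/-- `∂_a f = ½ (∂_u f + σ ∂_v f)`. -/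
def Da (f : ℝ × ℝ → LorentzA) (x : ℝ × ℝ) : LorentzA := ((2:ℝ)⁻¹) • (duA f x + sA * dvA f x)

/-- `∂_â f = ½ (∂_u f - σ ∂_v f)`.  A map is conformal iff `∂_â f = 0`. -/
def Dahat (f : ℝ × ℝ → LorentzA) (x : ℝ × ℝ) : LorentzA := ((2:ℝ)⁻¹) • (duA f x - sA * dvA f x)

/-- `∂_u f` for real-valued `f`. -/
def duR (f : ℝ × ℝ → ℝ) (x : ℝ × ℝ) : ℝ := fderiv ℝ f x (1, 0)

/-- `∂_v f` for real-valued `f`. -/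
def dvR (f : ℝ × ℝ → ℝ) (x : ℝ × ℝ) : ℝ := fderiv ℝ f x (0, 1)

/-- `∂²f/∂u²`. -/
def duuR (f : ℝ × ℝ → ℝ) (x : ℝ × ℝ) : ℝ := fderiv ℝ (fun y => fderiv ℝ f y (1, 0)) x (1, 0)

/-- `∂²f/∂v²`. -/
def dvvR (f : ℝ × ℝ → ℝ) (x : ℝ × ℝ) : ℝ := fderiv ℝ (fun y => fderiv ℝ f y (0, 1)) x (0, 1)

/-- The wave operator `□ f = -∂²f/∂u² + ∂²f/∂v²`. -/
def boxR (f : ℝ × ℝ → ℝ) (x : ℝ × ℝ) : ℝ := -duuR f x + dvvR f x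

/-! ### 2×2 matrices over `𝒜`. -/

abbrev M2A := Matrix (Fin 2) (Fin 2) LorentzA

/-- The conjugate transpose `B*` of `B ∈ M₂(𝒜)`. -/
def ctrans (B : M2A) : M2A := (B.map conjA).transpose

/-- `Herm₂(𝒜) = {B ∈ M₂(𝒜) : B = B*}`. -/
def Herm2 : Set M2A := {B | B = ctrans B}

/-- `SL₂(𝒜) = {B ∈ M₂(𝒜) : det B = 1}`. -/
def SL2A : Set M2A := {B | B.det = 1}

/-- The inclusion `M₂(ℝ) ⊆ M₂(𝒜)`. -/
def mR (C : Matrix (Fin 2) (Fin 2) ℝ) : M2A := C.map toA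

/-! ### The complexified Lorentz numbers `𝒜_ℂ = 𝒜 ⊗ ℂ ≅ ℂ × ℂ` (split coordinates),
and the quaternions `ℍ^{𝒜_ℂ}` with coefficients in `𝒜_ℂ`. -/

abbrev AC : Type := ℂ × ℂ

/-- `σ ∈ 𝒜_ℂ`. -/
def sC : AC := (1, -1)

/-- The complex unit `i ∈ 𝒜_ℂ`. -/
def iC : AC := (Complex.I, Complex.I)

/-- Conjugation `u + σ v ↦ u - σ v` (`u, v ∈ ℂ`) of `𝒜_ℂ`. -/
def hatC (z : AC) : AC := (z.2, z.1)

/-- The inclusion `ℝ ⊆ 𝒜_ℂ`. -/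
def rc (t : ℝ) : AC := ((t : ℂ), (t : ℂ))

/-- The inclusion `𝒜 ⊆ 𝒜_ℂ`. -/
def toAC (a : LorentzA) : AC := ((a.1 : ℂ), (a.2 : ℂ))

/-- `a ↦ i·a`, the image of `𝒜` in `i·𝒜 ⊆ 𝒜_ℂ`. -/
def iAC (a : LorentzA) : AC := (Complex.I * a.1, Complex.I * a.2)

/-- `ℍ^{𝒜_ℂ}`: quaternions `ζ₀·1 + ζ₁·I + ζ₂·J + ζ₃·K` with `ζᵢ ∈ 𝒜_ℂ`,
`I² = J² = K² = -1`, `IJ = -JI = K`. -/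
abbrev HAC := Quaternion AC

/-- The scalar quaternion `z·1`. -/
def qscalar (z : AC) : HAC := ⟨z, 0, 0, 0⟩

/-- The quaternion unit `I`. -/
def qI : HAC := ⟨0, 1, 0, 0⟩

/-- The quaternion unit `J`. -/
def qJ : HAC := ⟨0, 0, 1, 0⟩

/-- The quaternion unit `K`. -/
def qK : HAC := ⟨0, 0, 0, 1⟩

/-- `ζ̂`: apply `𝒜_ℂ`-conjugation to each coefficient of a quaternion.
(Quaternionic conjugation `ζ̄` is `star ζ`.) -/
def qhat (q : HAC) : HAC := ⟨hatC q.re, hatC q.imI, hatC q.imJ, hatC q.imK⟩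

/-- `H(ζ, ζ') = ½(ζ ζ̄' + ζ' ζ̄) = ζ₀ζ₀' + ζ₁ζ₁' + ζ₂ζ₂' + ζ₃ζ₃' ∈ 𝒜_ℂ`. -/
def Hform (q q' : HAC) : AC := q.re * q'.re + q.imI * q'.imI + q.imJ * q'.imJ + q.imK * q'.imK

/-- `p₀·1 + i p₁·I + p₂·J + i p₃·K` with `pᵢ ∈ 𝒜`: the generic element of `ℍ₀`. -/
def mk0 (p₀ p₁ p₂ p₃ : LorentzA) : HAC :=
  qscalar (toAC p₀) + qscalar (iAC p₁) * qI + qscalar (toAC p₂) * qJ + qscalar (iAC p₃) * qK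

/-- `i q₀·1 + q₁·I + i q₂·J + q₃·K` with `qᵢ ∈ 𝒜`: the generic element of `ℍ₁`. -/
def mk1 (q₀ q₁ q₂ q₃ : LorentzA) : HAC :=
  qscalar (iAC q₀) + qscalar (toAC q₁) * qI + qscalar (iAC q₂) * qJ + qscalar (toAC q₃) * qK

/-- `ℍ₀ = {p₀·1 + i p₁·I + p₂·J + i p₃·K : pᵢ ∈ 𝒜} ⊆ ℍ^{𝒜_ℂ}`. -/
def H0set : Set HAC := {ζ | ∃ p₀ p₁ p₂ p₃ : LorentzA, ζ = mk0 p₀ p₁ p₂ p₃}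

/-- `ℍ₁ = {i q₀·1 + q₁·I + i q₂·J + q₃·K : qᵢ ∈ 𝒜} ⊆ ℍ^{𝒜_ℂ}`. -/
def H1set : Set HAC := {ζ | ∃ q₀ q₁ q₂ q₃ : LorentzA, ζ = mk1 q₀ q₁ q₂ q₃}

/-- `Spin(2,2) = {p ∈ ℍ₀ : H(p,p) = 1}`. -/
def SpinSet : Set HAC := {p | p ∈ H0set ∧ Hform p p = 1}

/-- Extraction of the `𝒜`-coefficient of an element of `𝒜 ⊆ 𝒜_ℂ`. -/
def reEx (z : AC) : LorentzA := (z.1.re, z.2.re)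

/-- Extraction of the `𝒜`-coefficient of an element of `i·𝒜 ⊆ 𝒜_ℂ`. -/
def imEx (z : AC) : LorentzA := (z.1.im, z.2.im)

/-- The map `A₀ : ℍ₀ → M₂(𝒜)`,
`p₀·1 + i p₁·I + p₂·J + i p₃·K ↦ [[p₀ - σp₁, p₂ - σp₃], [-p₂ - σp₃, p₀ + σp₁]]`
(written via coefficient extraction, so that it is a total function on `ℍ^{𝒜_ℂ}`
agreeing with `A₀` on `ℍ₀`). -/
def A0 (ζ : HAC) : M2A :=
  !![reEx ζ.re - sA * imEx ζ.imI, reEx ζ.imJ - sA * imEx ζ.imK;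
     -reEx ζ.imJ - sA * imEx ζ.imK, reEx ζ.re + sA * imEx ζ.imI]

/-- The map `A₁ : ℍ₁ → M₂(𝒜)`,
`i q₀·1 + q₁·I + i q₂·J + q₃·K ↦ [[-q₁ - σq₀, -q₃ - σq₂], [-q₃ + σq₂, q₁ - σq₀]]`. -/
def A1 (ζ : HAC) : M2A :=
  !![-reEx ζ.imI - sA * imEx ζ.re, -reEx ζ.imK - sA * imEx ζ.imJ;
     -reEx ζ.imK + sA * imEx ζ.imJ, reEx ζ.imI - sA * imEx ζ.re]
/-- The quaternion `σi·x₀·1 + x₁·I + i·x₂·J + x₃·K ∈ ℍ^{𝒜_ℂ}`. -/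
def gammaV (x : Fin 4 → ℝ) : HAC :=
  qscalar (sC * iC * rc (x 0)) + qscalar (rc (x 1)) * qI + qscalar (iC * rc (x 2)) * qJ +
    qscalar (rc (x 3)) * qK

/-- The quaternion `-σi·x₀·1 + x₁·I + i·x₂·J + x₃·K ∈ ℍ^{𝒜_ℂ}`. -/
def gammaW (x : Fin 4 → ℝ) : HAC :=
  qscalar (-(sC * iC * rc (x 0))) + qscalar (rc (x 1)) * qI + qscalar (iC * rc (x 2)) * qJ +
    qscalar (rc (x 3)) * qK

/-- The Clifford map `γ : ℝ^{2,2} → M₂(ℍ^{𝒜_ℂ})`. -/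
def gammaMap (x : Fin 4 → ℝ) : Matrix (Fin 2) (Fin 2) HAC := !![0, gammaV x; gammaW x, 0]

/-! Negating the scalar part of a quaternion `q` produces `-star q`.  Hence the off-diagonal entries
of `γ(x)` are `q` and `-star q` with `q = gammaV x`, and `γ(x)²` is the scalar `-q * star q`,
that is, minus the quaternion norm of `q`.  In this norm the coefficients `σi` and `i` square to
`-1`, which produces the signature `(2,2)`. -/

theorem antidiag_mul_self_eq_algebraMap {R A : Type*} [CommSemiring R] [Semiring A]
    [Algebra R A] {a b : A} {r : R} (hab : a * b = algebraMap R A r)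
    (hba : b * a = algebraMap R A r) :
    !![0, a; b, 0] * !![0, a; b, 0] = algebraMap R (Matrix (Fin 2) (Fin 2) A) r := by
  rw [Matrix.algebraMap_eq_diagonal, Matrix.mul_fin_two, hab, hba]
  ext i j
  fin_cases i <;> fin_cases j <;> simp

theorem antidiag_neg_star_mul_self {R : Type*} [CommRing R] (q : Quaternion R) :
    !![0, q; -star q, 0] * !![0, q; -star q, 0] =
      algebraMap R (Matrix (Fin 2) (Fin 2) (Quaternion R)) (-Quaternion.normSq q) := by
  apply antidiag_mul_self_eq_algebraMap
  · rw [mul_neg, Quaternion.self_mul_star, map_neg, Quaternion.algebraMap_def]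
  · rw [neg_mul, Quaternion.star_mul_self, map_neg, Quaternion.algebraMap_def]

theorem sC_sq : sC ^ 2 = 1 := by
  ext <;> simp [sC]

theorem iC_sq : iC ^ 2 = -1 := by
  ext <;> simp [iC]

theorem rc_eq_algebraMap (t : ℝ) : rc t = algebraMap ℝ AC t := rfl

/-- The quaternion `a·1 + b·I + c·J + d·K` with coefficients in `𝒜_ℂ`, written in the basis
`qI`, `qJ`, `qK` so that `gammaV x` and `gammaW x` have this form by definition. -/
def ofCoeffs (a b c d : AC) : HAC :=
  qscalar a + qscalar b * qI + qscalar c * qJ + qscalar d * qK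

theorem qscalar_eq_coe (z : AC) : qscalar z = (z : HAC) := rfl

section ofCoeffs

variable (a b c d : AC)

@[simp]
theorem re_ofCoeffs : (ofCoeffs a b c d).re = a := by
  simp only [ofCoeffs, qscalar_eq_coe, Quaternion.coe_mul_eq_smul, Quaternion.re_add,
    Quaternion.re_smul]
  simp [qI, qJ, qK]

@[simp]
theorem imI_ofCoeffs : (ofCoeffs a b c d).imI = b := by
  simp only [ofCoeffs, qscalar_eq_coe, Quaternion.coe_mul_eq_smul, Quaternion.imI_add,
    Quaternion.imI_smul]
  simp [qI, qJ, qK]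

@[simp]
theorem imJ_ofCoeffs : (ofCoeffs a b c d).imJ = c := by
  simp only [ofCoeffs, qscalar_eq_coe, Quaternion.coe_mul_eq_smul, Quaternion.imJ_add,
    Quaternion.imJ_smul]
  simp [qI, qJ, qK]

@[simp]
theorem imK_ofCoeffs : (ofCoeffs a b c d).imK = d := by
  simp only [ofCoeffs, qscalar_eq_coe, Quaternion.coe_mul_eq_smul, Quaternion.imK_add,
    Quaternion.imK_smul]
  simp [qI, qJ, qK]

theorem ofCoeffs_neg_left : ofCoeffs (-a) b c d = -star (ofCoeffs a b c d) := by
  ext1 <;> simp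

theorem normSq_ofCoeffs :
    Quaternion.normSq (ofCoeffs a b c d) = a ^ 2 + b ^ 2 + c ^ 2 + d ^ 2 := by
  simp [Quaternion.normSq_def']

end ofCoeffs

theorem gammaV_eq_ofCoeffs (x : Fin 4 → ℝ) :
    gammaV x = ofCoeffs (sC * iC * rc (x 0)) (rc (x 1)) (iC * rc (x 2)) (rc (x 3)) := rfl

theorem gammaW_eq_neg_star_gammaV (x : Fin 4 → ℝ) : gammaW x = -star (gammaV x) :=
  ofCoeffs_neg_left ..

theorem normSq_gammaV (x : Fin 4 → ℝ) :
    Quaternion.normSq (gammaV x) =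
      algebraMap ℝ AC (-(x 0) ^ 2 + (x 1) ^ 2 - (x 2) ^ 2 + (x 3) ^ 2) := by
  simp only [gammaV_eq_ofCoeffs, normSq_ofCoeffs, rc_eq_algebraMap, mul_pow, sC_sq, iC_sq,
    map_add, map_sub, map_neg, map_pow]
  ring

/-- For every `x ∈ ℝ⁴`, `γ(x)² = -⟨x,x⟩·Id₂` where
`⟨x,x⟩ = -x₀² + x₁² - x₂² + x₃²`, i.e. `γ` is a Clifford map for the quadratic form of
signature `(2,2)` on `ℝ⁴`. -/
theorem stmt0 (x : Fin 4 → ℝ) :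
    gammaMap x * gammaMap x =
      algebraMap ℝ (Matrix (Fin 2) (Fin 2) HAC)
        (-(-(x 0) ^ 2 + (x 1) ^ 2 - (x 2) ^ 2 + (x 3) ^ 2)) := by
  rw [gammaMap, gammaW_eq_neg_star_gammaV, antidiag_neg_star_mul_self, normSq_gammaV, ← map_neg,
    ← IsScalarTower.algebraMap_apply]
end
end

section
/- Let Q be the quadratic form Q(x) = x₀² − x₁² + x₂² − x₃² on ℝ⁴ and let γ(x) := [[0, σi·x₀·1 + x₁I + i·x₂J + x₃K], [−σi·x₀·1 + x₁I + i·x₂J + x₃K, 0]] ∈ M₂(ℍ^{𝒜_ℂ}), which satisfies γ(x)² = Q(x)·Id₂. The real algebra homomorphism Cl(Q) → M₂(ℍ^{𝒜_ℂ}) induced by γ via the universal property of the Clifford algebra is injective, and its image is the real subalgebra {[[p, q], [q̂, p̂]] : p ∈ ℍ₀, q ∈ ℍ₁}. -/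
noncomputable section

/-- The quadratic form `Q(x) = x₀² - x₁² + x₂² - x₃²` on `ℝ⁴`. -/
def Q22 : QuadraticForm ℝ (Fin 4 → ℝ) := QuadraticMap.weightedSumSquares ℝ ![1, -1, 1, -1]

/-!
Complex conjugation on the coefficients, twisted by signs, is a real involution of `ℍ^{𝒜_ℂ}` whose
eigenspaces for `1` and `-1` are `ℍ₀` and `ℍ₁`. Hence `ℍ₀ ⊕ ℍ₁ = ℍ^{𝒜_ℂ}`, and the target
`{[[p, q], [q̂, p̂]]}` has real dimension `16 = 2 ^ 4`, the dimension of the Clifford algebra. Both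
claims follow as soon as the target is contained in the image. With `γ(e₀), …, γ(e₃)` the
generators, `γ(e₂) γ(e₃)` and `γ(e₃) γ(e₁)` are the diagonal matrices of `iI` and `J`; up to sign,
the former times `γ(e₁)` is the antidiagonal matrix of `i`, and `γ(e₀)` times that matrix is the
diagonal matrix of `σ`.
Now `σ`, `iI` and `J` generate `ℍ₀` as a real algebra, and `ℍ₁ = ℍ₀ · i`.
-/

open Module Module.End Matrix
open scoped Quaternion

section LinearAlgebra

variable {K V W : Type*} [Field K] [AddCommGroup V] [Module K V] [AddCommGroup W] [Module K W]

theorem isCompl_eigenspace_one_neg_one [NeZero (2 : K)] {θ : End K V}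
    (hθ : Function.Involutive θ) : IsCompl (eigenspace θ 1) (eigenspace θ (-1)) := by
  have two_ne : (2 : K) ≠ 0 := two_ne_zero
  refine ⟨?_, ?_⟩
  · refine disjoint_genEigenspace θ (fun h => two_ne ?_) 1 1
    linear_combination h
  · rw [codisjoint_iff, eq_top_iff]
    intro v _
    have hv : (2⁻¹ : K) • (v + θ v) + (2⁻¹ : K) • (v - θ v) = v := by
      rw [← smul_add, add_add_sub_cancel, ← two_smul K v, inv_smul_smul₀ two_ne]
    refine hv ▸ Submodule.add_mem_sup ?_ ?_
    · simp [hθ v, add_comm]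
    · simp [hθ v, ← smul_neg]

theorem range_eq_of_le_range_of_finrank_le [FiniteDimensional K V] {f : V →ₗ[K] W}
    {T : Submodule K W} (hT : T ≤ LinearMap.range f) (hd : finrank K V ≤ finrank K T) :
    LinearMap.range f = T :=
  (Submodule.eq_of_le_of_finrank_le hT ((LinearMap.finrank_range_le f).trans hd)).symm

theorem injective_of_le_range_of_finrank_le [FiniteDimensional K V] {f : V →ₗ[K] W}
    {T : Submodule K W} (hT : T ≤ LinearMap.range f) (hd : finrank K V ≤ finrank K T) :
    Function.Injective f := by
  have hrange : finrank K V ≤ finrank K (LinearMap.range f) :=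
    hd.trans (Submodule.finrank_mono hT)
  rw [← LinearMap.ker_eq_bot, ← Submodule.finrank_eq_zero]
  have := f.finrank_range_add_finrank_ker
  omega

end LinearAlgebra

section CliffordAlgebra

variable {R M : Type*} [CommRing R] [Invertible (2 : R)] [AddCommGroup M] [Module R M]
  [Module.Free R M] [Module.Finite R M]

theorem finite_cliffordAlgebra (Q : QuadraticForm R M) :
    Module.Finite R (CliffordAlgebra Q) :=
  have := Module.Finite.of_basis
    ((Free.chooseBasis R M).reindex (Fintype.equivFin _)).ExteriorAlgebra
  Module.Finite.equiv (CliffordAlgebra.equivExterior Q).symm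

theorem finrank_cliffordAlgebra [Nontrivial R] (Q : QuadraticForm R M) :
    finrank R (CliffordAlgebra Q) = 2 ^ finrank R M := by
  rw [(CliffordAlgebra.equivExterior Q).finrank_eq,
    finrank_eq_card_basis (finBasis R M).ExteriorAlgebra, Fintype.card_finset, Fintype.card_fin]

end CliffordAlgebra

section TwistedMatrix

variable {R A : Type*} [CommSemiring R] [Semiring A] [Algebra R A]

/-- The embedding `p ↦ diag(p, φ p)` of an algebra with endomorphism `φ` into its `2 × 2` matrices;
for `φ = ^` its restriction to `ℍ₀` is the even part of the Clifford algebra. -/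
def twistedDiag (φ : A →ₐ[R] A) : A →ₐ[R] Matrix (Fin 2) (Fin 2) A where
  toFun p := !![p, 0; 0, φ p]
  map_one' := by simp [one_fin_two]
  map_mul' p q := by simp
  map_zero' := by simp [← Matrix.ext_iff, Fin.forall_fin_two]
  map_add' p q := by simp
  commutes' r := by simp [← Matrix.ext_iff, Fin.forall_fin_two, Matrix.algebraMap_matrix_apply]

/-- The linear map sending `q` to the matrix with antidiagonal entries `q` (upper right) and `φ q`
(lower left); for `φ = ^` it gives the odd part of the Clifford algebra. -/
def twistedAntidiag (φ : A →ₐ[R] A) : A →ₗ[R] Matrix (Fin 2) (Fin 2) A where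
  toFun q := !![0, q; φ q, 0]
  map_add' p q := by simp
  map_smul' r q := by simp

variable (φ : A →ₐ[R] A)

theorem twistedDiag_mul_twistedAntidiag (p q : A) :
    twistedDiag φ p * twistedAntidiag φ q = twistedAntidiag φ (p * q) := by
  simp [twistedDiag, twistedAntidiag]

theorem twistedAntidiag_mul_twistedAntidiag {φ : A →ₐ[R] A} (hφ : Function.Involutive φ)
    (p q : A) : twistedAntidiag φ p * twistedAntidiag φ q = twistedDiag φ (p * φ q) := by
  simp [twistedDiag, twistedAntidiag, hφ q]

/-- The linear parametrization `(p, q) ↦ [[p, q], [φ q, φ p]]`, whose restriction to `ℍ₀ × ℍ₁` has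
the claimed image of the Clifford algebra as its range. -/
def twistedMatrix : A × A →ₗ[R] Matrix (Fin 2) (Fin 2) A :=
  (twistedDiag φ).toLinearMap.coprod (twistedAntidiag φ)

theorem twistedMatrix_apply (x : A × A) :
    twistedMatrix φ x = !![x.1, x.2; φ x.2, φ x.1] := by
  simp [twistedMatrix, twistedDiag, twistedAntidiag]

theorem twistedMatrix_injective : Function.Injective (twistedMatrix φ) := fun x y h => by
  simp only [twistedMatrix_apply] at h
  exact Prod.ext (congrFun (congrFun h 0) 0) (congrFun (congrFun h 0) 1)

end TwistedMatrix

section Quaternion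

/-- The quaternion `a + bi + cj + dk`. Unlike the anonymous constructor, which produces a term of
type `QuaternionAlgebra R _ _ _`, it has the type `Quaternion R` that the simp lemmas about
`Quaternion` expect. -/
@[simps]
def quaternionMk {R : Type*} [Zero R] [One R] [Neg R] (a b c d : R) : Quaternion R := ⟨a, b, c, d⟩

variable {R S T : Type*} [CommSemiring R] [CommRing S] [CommRing T] [Algebra R S] [Algebra R T]

/-- The algebra homomorphism `Quaternion S → Quaternion T` obtained by applying `g : S → T` to each
coefficient. It makes `ζ ↦ ζ̂` multiplicative without a computation. -/
def quaternionMap (g : S →ₐ[R] T) : Quaternion S →ₐ[R] Quaternion T where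
  toFun ζ := quaternionMk (g ζ.re) (g ζ.imI) (g ζ.imJ) (g ζ.imK)
  map_one' := by ext <;> simp
  map_mul' p q := by ext <;> simp
  map_zero' := by ext <;> simp
  map_add' p q := by ext <;> simp
  commutes' r := by
    simp only [Algebra.algebraMap_eq_smul_one]
    ext <;> simp

end Quaternion

theorem qscalar_eq (z : AC) : qscalar z = quaternionMk z 0 0 0 := rfl

theorem qI_eq : qI = quaternionMk 0 1 0 0 := rfl

theorem qJ_eq : qJ = quaternionMk 0 0 1 0 := rfl

theorem qK_eq : qK = quaternionMk 0 0 0 1 := rfl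

/-- The conjugation `ζ ↦ ζ̂` as a real algebra homomorphism. -/
def qhatAlgHom : HAC →ₐ[ℝ] HAC := quaternionMap ((AlgHom.snd ℝ ℂ ℂ).prod (AlgHom.fst ℝ ℂ ℂ))

theorem qhat_eq (ζ : HAC) :
    qhat ζ = quaternionMk (hatC ζ.re) (hatC ζ.imI) (hatC ζ.imJ) (hatC ζ.imK) := rfl

theorem qhatAlgHom_apply (ζ : HAC) : qhatAlgHom ζ = qhat ζ := rfl

theorem qhatAlgHom_involutive : Function.Involutive qhatAlgHom := fun _ => rfl

theorem finrank_HAC : finrank ℝ HAC = 16 := by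
  rw [← finrank_mul_finrank ℝ AC HAC]
  simp [Complex.finrank_real_complex, Quaternion.finrank_eq_four]

theorem mk0_eq (p₀ p₁ p₂ p₃ : LorentzA) :
    mk0 p₀ p₁ p₂ p₃ = quaternionMk (toAC p₀) (iAC p₁) (toAC p₂) (iAC p₃) := by
  ext1 <;> simp [mk0, qscalar_eq, qI_eq, qJ_eq, qK_eq]

theorem mk1_eq (q₀ q₁ q₂ q₃ : LorentzA) :
    mk1 q₀ q₁ q₂ q₃ = quaternionMk (iAC q₀) (toAC q₁) (iAC q₂) (toAC q₃) := by
  ext1 <;> simp [mk1, qscalar_eq, qI_eq, qJ_eq, qK_eq]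

theorem star_eq_self_iff_exists_toAC {z : AC} : star z = z ↔ ∃ a, z = toAC a := by
  refine ⟨fun h => ⟨reEx z, ?_⟩, ?_⟩
  · exact Prod.ext (Complex.conj_eq_iff_re.mp (congrArg Prod.fst h)).symm
      (Complex.conj_eq_iff_re.mp (congrArg Prod.snd h)).symm
  · rintro ⟨a, rfl⟩
    simp [Prod.ext_iff, toAC]

theorem star_eq_neg_iff_exists_iAC {z : AC} : star z = -z ↔ ∃ a, z = iAC a := by
  refine ⟨fun h => ⟨imEx z, ?_⟩, ?_⟩
  · have h₁ : z.1.re = -z.1.re := congrArg (fun w : AC => w.1.re) h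
    have h₂ : z.2.re = -z.2.re := congrArg (fun w : AC => w.2.re) h
    ext1 <;> apply Complex.ext <;> simp [iAC, imEx] <;> linarith
  · rintro ⟨a, rfl⟩
    simp [Prod.ext_iff, iAC]

/-- The conjugation `ζ₀ + ζ₁I + ζ₂J + ζ₃K ↦ ζ̄₀ - ζ̄₁I + ζ̄₂J - ζ̄₃K` of `ℍ^{𝒜_ℂ}`, where the bar is
complex conjugation on `𝒜_ℂ`. It encodes `ℍ₀` and `ℍ₁` as its eigenspaces for `1` and `-1`. -/
def realFormConj : End ℝ HAC where
  toFun ζ := quaternionMk (star ζ.re) (-star ζ.imI) (star ζ.imJ) (-star ζ.imK)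
  map_add' p q := by ext1 <;> simp [add_comm]
  map_smul' r p := by ext1 <;> simp [star_smul]

theorem realFormConj_involutive : Function.Involutive realFormConj := fun ζ => by
  ext1 <;> simp [realFormConj]

theorem realFormConj_eq_self_iff {ζ : HAC} : realFormConj ζ = ζ ↔ ζ ∈ H0set := by
  simp [realFormConj, H0set, mk0_eq, Quaternion.ext_iff, neg_eq_iff_eq_neg,
    star_eq_self_iff_exists_toAC, star_eq_neg_iff_exists_iAC]

theorem realFormConj_eq_neg_iff {ζ : HAC} : realFormConj ζ = -ζ ↔ ζ ∈ H1set := by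
  simp [realFormConj, H1set, mk1_eq, Quaternion.ext_iff, star_eq_self_iff_exists_toAC,
    star_eq_neg_iff_exists_iAC]

/-- The claimed image `{[[p, q], [q̂, p̂]] : p ∈ ℍ₀, q ∈ ℍ₁}` as a real subspace. It is defined as
the range of a linear map on the eigenspaces of `realFormConj`, so that its dimension can be read
off. -/
def cliffordImage : Submodule ℝ (Matrix (Fin 2) (Fin 2) HAC) :=
  LinearMap.range (twistedMatrix qhatAlgHom ∘ₗ
    (eigenspace realFormConj 1).subtype.prodMap (eigenspace realFormConj (-1)).subtype)

theorem coe_cliffordImage :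
    (cliffordImage : Set (Matrix (Fin 2) (Fin 2) HAC)) =
      {M | ∃ p ∈ H0set, ∃ q ∈ H1set, M = !![p, q; qhat q, qhat p]} := by
  ext M
  simp [cliffordImage, realFormConj_eq_self_iff, realFormConj_eq_neg_iff, twistedMatrix_apply,
    qhatAlgHom_apply, eq_comm (a := M)]

theorem finrank_cliffordImage : finrank ℝ cliffordImage = 16 :=
  calc
    finrank ℝ cliffordImage
    _ = finrank ℝ (eigenspace realFormConj 1 × eigenspace realFormConj (-1)) :=
      LinearMap.finrank_range_of_inj <| (twistedMatrix_injective qhatAlgHom).comp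
        (Subtype.val_injective.prodMap Subtype.val_injective)
    _ = finrank ℝ HAC :=
      (Submodule.prodEquivOfIsCompl _ _
        (isCompl_eigenspace_one_neg_one realFormConj_involutive)).finrank_eq
    _ = 16 := finrank_HAC

theorem mk1_eq_mk0_mul (q₀ q₁ q₂ q₃ : LorentzA) :
    mk1 q₀ q₁ q₂ q₃ = mk0 q₀ (-q₁) q₂ (-q₃) * qscalar iC := by
  rw [mk0_eq, mk1_eq]
  ext <;> simp [qscalar_eq, iC, toAC, iAC, mul_comm, ← mul_assoc]

theorem qscalar_toAC_mem {B : Subalgebra ℝ HAC} (hσ : qscalar sC ∈ B) (a : LorentzA) :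
    qscalar (toAC a) ∈ B := by
  have ha : qscalar (toAC a) = ReA a • (1 : HAC) + ImA a • qscalar sC := by
    ext <;> simp [qscalar_eq, toAC, ReA, ImA, sC] <;> ring
  exact ha ▸ B.add_mem (B.smul_mem B.one_mem _) (B.smul_mem hσ _)

theorem mk0_mem_subalgebra {B : Subalgebra ℝ HAC} (hσ : qscalar sC ∈ B) (hI : qscalar iC * qI ∈ B)
    (hJ : qJ ∈ B) (p₀ p₁ p₂ p₃ : LorentzA) : mk0 p₀ p₁ p₂ p₃ ∈ B := by
  have hp : mk0 p₀ p₁ p₂ p₃ = qscalar (toAC p₀) + qscalar (toAC p₁) * (qscalar iC * qI) +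
      qscalar (toAC p₂) * qJ + qscalar (toAC p₃) * (qscalar iC * qI * qJ) := by
    rw [mk0_eq]
    ext <;> simp [qscalar_eq, qI_eq, qJ_eq, iC, toAC, iAC, mul_comm]
  rw [hp]
  have hLorentz := qscalar_toAC_mem hσ
  exact add_mem (add_mem (add_mem (hLorentz _) (mul_mem (hLorentz _) hI)) (mul_mem (hLorentz _) hJ))
    (mul_mem (hLorentz _) (mul_mem hI hJ))

theorem gammaV_eq (x : Fin 4 → ℝ) :
    gammaV x = quaternionMk (sC * iC * rc (x 0)) (rc (x 1)) (iC * rc (x 2)) (rc (x 3)) := by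
  ext1 <;> simp [gammaV, qscalar_eq, qI_eq, qJ_eq, qK_eq]

theorem gammaMap_eq_twistedAntidiag (x : Fin 4 → ℝ) :
    gammaMap x = twistedAntidiag qhatAlgHom (gammaV x) := by
  have hW : gammaW x = qhat (gammaV x) := by
    rw [gammaV_eq]
    ext <;> simp [gammaW, qhat_eq, qscalar_eq, qI_eq, qJ_eq, qK_eq, hatC, sC, iC, rc]
  rw [gammaMap, hW]
  rfl

theorem gammaV_single_zero : gammaV (Pi.single 0 1) = qscalar (sC * iC) := by
  ext <;> simp [gammaV_eq, qscalar_eq, rc, sC, iC]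

theorem gammaV_single_one : gammaV (Pi.single 1 1) = qI := by
  ext <;> simp [gammaV_eq, qI_eq, rc]

theorem gammaV_single_two : gammaV (Pi.single 2 1) = qscalar iC * qJ := by
  ext <;> simp [gammaV_eq, qscalar_eq, qJ_eq, rc, iC]

theorem gammaV_single_three : gammaV (Pi.single 3 1) = qK := by
  ext <;> simp [gammaV_eq, qK_eq, rc]

section GammaSubalgebra

variable {S : Subalgebra ℝ (Matrix (Fin 2) (Fin 2) HAC)}

theorem twistedAntidiag_gammaV_mem (hS : ∀ x, gammaMap x ∈ S) (x : Fin 4 → ℝ) :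
    twistedAntidiag qhatAlgHom (gammaV x) ∈ S :=
  gammaMap_eq_twistedAntidiag x ▸ hS x

theorem twistedDiag_gammaV_mul_mem (hS : ∀ x, gammaMap x ∈ S) (x y : Fin 4 → ℝ) :
    twistedDiag qhatAlgHom (gammaV x * qhatAlgHom (gammaV y)) ∈ S := by
  rw [← twistedAntidiag_mul_twistedAntidiag qhatAlgHom_involutive]
  exact mul_mem (twistedAntidiag_gammaV_mem hS x) (twistedAntidiag_gammaV_mem hS y)

theorem twistedDiag_iI_mem (hS : ∀ x, gammaMap x ∈ S) :
    twistedDiag qhatAlgHom (qscalar iC * qI) ∈ S := by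
  have h : gammaV (Pi.single 2 1) * qhatAlgHom (gammaV (Pi.single 3 1)) = qscalar iC * qI := by
    rw [gammaV_single_two, gammaV_single_three, qhatAlgHom_apply]
    ext <;> simp [qhat_eq, qscalar_eq, qI_eq, qJ_eq, qK_eq, hatC]
  exact h ▸ twistedDiag_gammaV_mul_mem hS _ _

theorem twistedDiag_J_mem (hS : ∀ x, gammaMap x ∈ S) :
    twistedDiag qhatAlgHom qJ ∈ S := by
  have h : gammaV (Pi.single 3 1) * qhatAlgHom (gammaV (Pi.single 1 1)) = qJ := by
    rw [gammaV_single_one, gammaV_single_three, qhatAlgHom_apply]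
    ext <;> simp [qhat_eq, qI_eq, qJ_eq, qK_eq, hatC]
  exact h ▸ twistedDiag_gammaV_mul_mem hS _ _

theorem twistedAntidiag_i_mem (hS : ∀ x, gammaMap x ∈ S) :
    twistedAntidiag qhatAlgHom (qscalar iC) ∈ S := by
  have h : qscalar iC = -(qscalar iC * qI * gammaV (Pi.single 1 1)) := by
    rw [gammaV_single_one]
    ext1 <;> simp [qscalar_eq, qI_eq]
  rw [h, map_neg, ← twistedDiag_mul_twistedAntidiag]
  exact neg_mem (mul_mem (twistedDiag_iI_mem hS) (twistedAntidiag_gammaV_mem hS _))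

theorem twistedDiag_sigma_mem (hS : ∀ x, gammaMap x ∈ S) :
    twistedDiag qhatAlgHom (qscalar sC) ∈ S := by
  have h : qscalar sC = -(gammaV (Pi.single 0 1) * qhatAlgHom (qscalar iC)) := by
    rw [gammaV_single_zero, qhatAlgHom_apply]
    ext <;> simp [qhat_eq, qscalar_eq, hatC, sC, iC]
  rw [h, map_neg, ← twistedAntidiag_mul_twistedAntidiag qhatAlgHom_involutive]
  exact neg_mem (mul_mem (twistedAntidiag_gammaV_mem hS _) (twistedAntidiag_i_mem hS))

theorem twistedDiag_mk0_mem (hS : ∀ x, gammaMap x ∈ S) (p₀ p₁ p₂ p₃ : LorentzA) :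
    twistedDiag qhatAlgHom (mk0 p₀ p₁ p₂ p₃) ∈ S :=
  mk0_mem_subalgebra (B := S.comap (twistedDiag qhatAlgHom)) (twistedDiag_sigma_mem hS)
    (twistedDiag_iI_mem hS) (twistedDiag_J_mem hS) p₀ p₁ p₂ p₃

theorem twistedAntidiag_mk1_mem (hS : ∀ x, gammaMap x ∈ S) (q₀ q₁ q₂ q₃ : LorentzA) :
    twistedAntidiag qhatAlgHom (mk1 q₀ q₁ q₂ q₃) ∈ S := by
  rw [mk1_eq_mk0_mul, ← twistedDiag_mul_twistedAntidiag]
  exact mul_mem (twistedDiag_mk0_mem hS _ _ _ _) (twistedAntidiag_i_mem hS)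

theorem cliffordImage_le (hS : ∀ x, gammaMap x ∈ S) :
    cliffordImage ≤ Subalgebra.toSubmodule S := by
  rintro _ ⟨⟨⟨p, hp⟩, ⟨q, hq⟩⟩, rfl⟩
  obtain ⟨p₀, p₁, p₂, p₃, rfl⟩ := realFormConj_eq_self_iff.mp (by simpa using hp)
  obtain ⟨q₀, q₁, q₂, q₃, rfl⟩ := realFormConj_eq_neg_iff.mp (by simpa using hq)
  exact add_mem (twistedDiag_mk0_mem hS p₀ p₁ p₂ p₃) (twistedAntidiag_mk1_mem hS q₀ q₁ q₂ q₃)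

end GammaSubalgebra

/-- The real algebra homomorphism `Cl(Q) → M₂(ℍ^{𝒜_ℂ})` induced by `γ` via
the universal property of the Clifford algebra (i.e. the algebra map `f` with
`f (ι x) = γ(x)` for all `x`) is injective, and its image is the real subalgebra
`{[[p, q], [q̂, p̂]] : p ∈ ℍ₀, q ∈ ℍ₁}`. -/
theorem stmt1 (f : CliffordAlgebra Q22 →ₐ[ℝ] Matrix (Fin 2) (Fin 2) HAC)
    (hf : ∀ x, f (CliffordAlgebra.ι Q22 x) = gammaMap x) :
    Function.Injective ⇑f ∧
      Set.range ⇑f =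
        {M : Matrix (Fin 2) (Fin 2) HAC |
          ∃ p ∈ H0set, ∃ q ∈ H1set, M = !![p, q; qhat q, qhat p]} := by
  have hle : cliffordImage ≤ LinearMap.range f.toLinearMap :=
    cliffordImage_le (S := f.range) fun x => ⟨CliffordAlgebra.ι Q22 x, hf x⟩
  have hdim : finrank ℝ (CliffordAlgebra Q22) ≤ finrank ℝ cliffordImage := by
    simp [finrank_cliffordAlgebra, finrank_cliffordImage]
  have := finite_cliffordAlgebra Q22
  refine ⟨injective_of_le_range_of_finrank_le hle hdim, ?_⟩
  rw [← coe_cliffordImage, ← range_eq_of_le_range_of_finrank_le hle hdim]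
  rfl
end
end

section
/- For all p, p' ∈ ℍ₀, the products σi·1·p·p' and p·I·p' lie in ℍ₁, and one has A₁(σi·1·p·p') = −A₀(p)·A₀(p') and A₁(p·I·p') = A₀(p)·diag(−1, 1)·A₀(p'). -/
noncomputable section

/-!
As `(iI)² = 1`, `J² = -1` and `iI · J = -J · iI = iK`, the space `ℍ₀` is an algebra of split
quaternions over `𝒜`, and on it `A₀` is the algebra homomorphism sending `iI` to `diag(-σ, σ)` and
`J` to `[[0, 1], [-1, 0]]`.  Multiplication by `σi` carries `ℍ₀` into `ℍ₁` and turns `A₁` into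
`-A₀`.  This settles `σi·p·p'`; the other product reduces to it because `I = σi·(-σiI)` with `σi`
central, so that `p·I·p' = σi·(p·(-σiI)·p')`, where `A₀(-σiI) = diag(1, -1)`.
-/

open scoped Quaternion

/-- The images of `iI, J, iK` under `A₀` when `s = σ`: a split quaternion basis of `M₂(R)`, for any
square root `s` of `1` in `R`. -/
def matrixSplitBasis {R : Type*} [CommRing R] (s : R) (hs : s * s = 1) :
    QuaternionAlgebra.Basis (Matrix (Fin 2) (Fin 2) R) (1 : R) 0 (-1) where
  i := !![-s, 0; 0, s]
  j := !![0, 1; -1, 0]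
  k := !![0, -s; -s, 0]
  i_mul_i := by simp [hs, Matrix.one_fin_two]
  j_mul_j := by simp [Matrix.one_fin_two]
  i_mul_j := by simp
  j_mul_i := by simp

attribute [simps] qscalar qI qJ qK

/-- The structure of `𝒜`-algebra on `𝒜_ℂ` given by the inclusion `toAC`. -/
instance : Algebra LorentzA AC :=
  ((algebraMap ℝ ℂ).prodMap (algebraMap ℝ ℂ)).toAlgebra

lemma algebraMap_eq_qscalar (a : LorentzA) : algebraMap LorentzA HAC a = qscalar (toAC a) := rfl

lemma sA_mul_self : sA * sA = 1 := by
  ext <;> simp [sA]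

lemma iC_mul_self : iC * iC = -1 := by
  ext1 <;> simp [iC]

lemma toAC_mul_iC (a : LorentzA) : toAC a * iC = iAC a := by
  ext1 <;> simp [toAC, iC, iAC, mul_comm]

lemma sC_mul_iC_mul_toAC (a : LorentzA) : sC * iC * toAC a = iAC (sA * a) := by
  ext1 <;> simp [sC, iC, toAC, iAC, sA]

lemma sC_mul_iC_mul_iAC (a : LorentzA) : sC * iC * iAC a = toAC (-(sA * a)) := by
  ext1 <;> simp [sC, iC, toAC, iAC, sA, ← mul_assoc]

lemma reEx_toAC (a : LorentzA) : reEx (toAC a) = a := by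
  simp [reEx, toAC]

lemma imEx_iAC (a : LorentzA) : imEx (iAC a) = a := by
  simp [imEx, iAC]

lemma reEx_sC_mul_iC_mul (z : AC) : reEx (sC * iC * z) = -(sA * imEx z) := by
  ext <;> simp [reEx, imEx, sC, iC, sA]

lemma imEx_sC_mul_iC_mul (z : AC) : imEx (sC * iC * z) = sA * reEx z := by
  ext <;> simp [reEx, imEx, sC, iC, sA]

lemma qscalar_commutes (z : AC) (ζ : HAC) : qscalar z * ζ = ζ * qscalar z :=
  Quaternion.coe_commutes z ζ

@[simp] lemma mk0_re (a b c d : LorentzA) : (mk0 a b c d).re = toAC a := by simp [mk0]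

@[simp] lemma mk0_imI (a b c d : LorentzA) : (mk0 a b c d).imI = iAC b := by simp [mk0]

@[simp] lemma mk0_imJ (a b c d : LorentzA) : (mk0 a b c d).imJ = toAC c := by simp [mk0]

@[simp] lemma mk0_imK (a b c d : LorentzA) : (mk0 a b c d).imK = iAC d := by simp [mk0]

@[simp] lemma mk1_re (a b c d : LorentzA) : (mk1 a b c d).re = iAC a := by simp [mk1]

@[simp] lemma mk1_imI (a b c d : LorentzA) : (mk1 a b c d).imI = toAC b := by simp [mk1]

@[simp] lemma mk1_imJ (a b c d : LorentzA) : (mk1 a b c d).imJ = iAC c := by simp [mk1]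

@[simp] lemma mk1_imK (a b c d : LorentzA) : (mk1 a b c d).imK = toAC d := by simp [mk1]

lemma A0_mk0 (a b c d : LorentzA) :
    A0 (mk0 a b c d) = !![a - sA * b, c - sA * d; -c - sA * d, a + sA * b] := by
  simp only [A0, mk0_re, mk0_imI, mk0_imJ, mk0_imK, reEx_toAC, imEx_iAC]

/-- The split quaternion basis `iI, J, iK` of `ℍ₀` over `𝒜`. -/
def H0Basis : QuaternionAlgebra.Basis HAC (1 : LorentzA) 0 (-1) where
  i := qscalar iC * qI
  j := qJ
  k := qscalar iC * qK
  i_mul_i := by apply Quaternion.ext <;> simp [iC_mul_self]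
  j_mul_j := by apply Quaternion.ext <;> simp
  i_mul_j := by apply Quaternion.ext <;> simp
  j_mul_i := by apply Quaternion.ext <;> simp

/-- The inclusion of `ℍ₀`, regarded as the algebra of split quaternions over `𝒜`, in `ℍ^{𝒜_ℂ}`. -/
def H0Hom : ℍ[LorentzA,1,0,-1] →ₐ[LorentzA] HAC :=
  H0Basis.liftHom

/-- The map `A₀` on split quaternions over `𝒜`, as a homomorphism of algebras. -/
def A0Hom : ℍ[LorentzA,1,0,-1] →ₐ[LorentzA] M2A :=
  (matrixSplitBasis sA sA_mul_self).liftHom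

lemma H0Hom_apply (q : ℍ[LorentzA,1,0,-1]) : H0Hom q = mk0 q.re q.imI q.imJ q.imK := by
  apply Quaternion.ext <;> simp [H0Hom, QuaternionAlgebra.Basis.lift, H0Basis, Algebra.smul_def,
    algebraMap_eq_qscalar, toAC_mul_iC]

lemma A0Hom_apply (q : ℍ[LorentzA,1,0,-1]) : A0Hom q = A0 (H0Hom q) := by
  rw [H0Hom_apply, A0_mk0]
  simp [A0Hom, QuaternionAlgebra.Basis.lift, matrixSplitBasis, Algebra.algebraMap_eq_smul_one,
    Matrix.one_fin_two, sub_eq_add_neg, mul_comm sA]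

lemma coe_range_H0Hom : (H0Hom.range : Set HAC) = H0set := by
  ext ζ
  constructor
  · rintro ⟨q, rfl⟩
    exact ⟨_, _, _, _, H0Hom_apply q⟩
  · rintro ⟨a, b, c, d, rfl⟩
    exact ⟨⟨a, b, c, d⟩, H0Hom_apply _⟩

lemma mul_mem_H0set {p p' : HAC} (hp : p ∈ H0set) (hp' : p' ∈ H0set) : p * p' ∈ H0set := by
  rw [← coe_range_H0Hom] at hp hp' ⊢
  exact H0Hom.range.mul_mem hp hp'

lemma A0_mul {p p' : HAC} (hp : p ∈ H0set) (hp' : p' ∈ H0set) : A0 (p * p') = A0 p * A0 p' := by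
  rw [← coe_range_H0Hom] at hp hp'
  obtain ⟨q, rfl⟩ := hp
  obtain ⟨q', rfl⟩ := hp'
  calc A0 (H0Hom q * H0Hom q') = A0Hom (q * q') := by rw [A0Hom_apply, map_mul]
    _ = A0 (H0Hom q) * A0 (H0Hom q') := by rw [map_mul, A0Hom_apply, A0Hom_apply]

lemma qscalar_sC_mul_iC_mul_mk0 (a b c d : LorentzA) :
    qscalar (sC * iC) * mk0 a b c d = mk1 (sA * a) (-(sA * b)) (sA * c) (-(sA * d)) := by
  apply Quaternion.ext <;> simp [sC_mul_iC_mul_toAC, sC_mul_iC_mul_iAC]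

lemma qscalar_sC_mul_iC_mul_mem_H1set {p : HAC} (hp : p ∈ H0set) :
    qscalar (sC * iC) * p ∈ H1set := by
  obtain ⟨a, b, c, d, rfl⟩ := hp
  exact ⟨_, _, _, _, qscalar_sC_mul_iC_mul_mk0 a b c d⟩

lemma A1_qscalar_sC_mul_iC_mul (ζ : HAC) : A1 (qscalar (sC * iC) * ζ) = -A0 ζ := by
  have sA_mul_sA_mul (a : LorentzA) : sA * (sA * a) = a := by
    rw [← mul_assoc, sA_mul_self, one_mul]
  ext1 i j
  fin_cases i <;> fin_cases j <;>
    simp [A0, A1, reEx_sC_mul_iC_mul, imEx_sC_mul_iC_mul, sA_mul_sA_mul, sub_eq_add_neg, add_comm]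

lemma qI_eq_qscalar_mul_mk0 : qI = qscalar (sC * iC) * mk0 0 (-sA) 0 0 := by
  rw [qscalar_sC_mul_iC_mul_mk0]
  apply Quaternion.ext <;> simp [iAC, toAC, sA_mul_self, Prod.mk_zero_zero, Prod.mk_one_one]

lemma A0_mk0_neg_sA : A0 (mk0 0 (-sA) 0 0) = !![1, 0; 0, -1] := by
  simp [A0_mk0, sA_mul_self]

/-- For all `p, p' ∈ ℍ₀`, the products `σi·1·p·p'` and `p·I·p'` lie in `ℍ₁`,
`A₁(σi·1·p·p') = -A₀(p)·A₀(p')` and `A₁(p·I·p') = A₀(p)·diag(-1,1)·A₀(p')`. -/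
theorem stmt5 (p p' : HAC) (hp : p ∈ H0set) (hp' : p' ∈ H0set) :
    qscalar (sC * iC) * p * p' ∈ H1set ∧
    p * qI * p' ∈ H1set ∧
    A1 (qscalar (sC * iC) * p * p') = -(A0 p * A0 p') ∧
    A1 (p * qI * p') = A0 p * !![(-1 : LorentzA), 0; 0, 1] * A0 p' := by
  have hu : mk0 0 (-sA) 0 0 ∈ H0set := ⟨_, _, _, _, rfl⟩
  have h_qI : p * qI * p' = qscalar (sC * iC) * (p * mk0 0 (-sA) 0 0 * p') := by
    rw [qI_eq_qscalar_mul_mk0, ← mul_assoc p, ← qscalar_commutes, mul_assoc, mul_assoc, mul_assoc]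
  have h_diag : !![(-1 : LorentzA), 0; 0, 1] = -A0 (mk0 0 (-sA) 0 0) := by
    simp [A0_mk0_neg_sA]
  rw [mul_assoc, h_qI]
  refine ⟨qscalar_sC_mul_iC_mul_mem_H1set (mul_mem_H0set hp hp'),
    qscalar_sC_mul_iC_mul_mem_H1set (mul_mem_H0set (mul_mem_H0set hp hu) hp'), ?_, ?_⟩
  · rw [A1_qscalar_sC_mul_iC_mul, A0_mul hp hp']
  · rw [A1_qscalar_sC_mul_iC_mul, A0_mul (mul_mem_H0set hp hu) hp', A0_mul hp hu, h_diag,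
      mul_neg, neg_mul]
end
end

section
/- The set {C ∈ Herm₂(𝒜) : det C = 1} equals {B·B* : B ∈ SL₂(𝒜)}. (Under the identification of ℝ^{2,2} with (Herm₂(𝒜), −det), this set is the Anti-de Sitter space ℍ^{2,1} = {x : ⟨x,x⟩ = −1}.) -/
noncomputable section

/-! In split coordinates conjugation is the swap, so a matrix over `𝒜 = ℝ × ℝ` is a pair `(P, Q)` of
real matrices, with `(P, Q)* = (Qᵀ, Pᵀ)`. Hence the Hermitian matrices are the pairs `(P, Pᵀ)`, and
`(P, Q) (P, Q)* = (P Qᵀ, (P Qᵀ)ᵀ)`. Every Hermitian `(P, Pᵀ)` is therefore `B B*` with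
`B = (P, 1)`, and `det B = (det P, 1)` is `1` as soon as `det P = 1`. -/

section PairMatrix

open Matrix

variable {l m n R S : Type*}

/-- The matrix over `R × S` whose two coordinates are the matrices `P` over `R` and `Q` over `S`;
for `R = S = ℝ` it is the matrix `(1 + σ)/2 P + (1 - σ)/2 Q` over `𝒜`. -/
def pairMatrix (P : Matrix m n R) (Q : Matrix m n S) : Matrix m n (R × S) :=
  of fun i j => (P i j, Q i j)

/-- The conjugate transpose of a matrix over `R × R`, where conjugation is the swap of the two
coordinates; for `R = ℝ` it is `B*`. It is not Mathlib's `conjTranspose`, because the `star` of a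
product acts coordinatewise. -/
def swapConjTranspose (C : Matrix m n (R × R)) : Matrix n m (R × R) :=
  (C.map Prod.swap)ᵀ

theorem exists_eq_pairMatrix (C : Matrix m n (R × S)) : ∃ P Q, C = pairMatrix P Q :=
  ⟨C.map Prod.fst, C.map Prod.snd, rfl⟩

theorem pairMatrix_inj {P P' : Matrix m n R} {Q Q' : Matrix m n S} :
    pairMatrix P Q = pairMatrix P' Q' ↔ P = P' ∧ Q = Q' := by
  refine ⟨fun h => ⟨congrArg (Matrix.map · Prod.fst) h, congrArg (Matrix.map · Prod.snd) h⟩, ?_⟩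
  rintro ⟨rfl, rfl⟩
  rfl

theorem pairMatrix_mul [Fintype m] [NonUnitalNonAssocSemiring R] [NonUnitalNonAssocSemiring S]
    (P : Matrix l m R) (Q : Matrix l m S) (P' : Matrix m n R) (Q' : Matrix m n S) :
    pairMatrix P Q * pairMatrix P' Q' = pairMatrix (P * P') (Q * Q') := by
  ext i j <;> simp [pairMatrix, mul_apply, Prod.fst_sum, Prod.snd_sum]

theorem det_pairMatrix [Fintype n] [DecidableEq n] [CommRing R] [CommRing S]
    (P : Matrix n n R) (Q : Matrix n n S) : (pairMatrix P Q).det = (P.det, Q.det) :=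
  Prod.ext ((RingHom.fst R S).map_det (pairMatrix P Q)) ((RingHom.snd R S).map_det (pairMatrix P Q))

theorem det_pairMatrix_eq_one_iff [Fintype n] [DecidableEq n] [CommRing R] [CommRing S]
    {P : Matrix n n R} {Q : Matrix n n S} :
    (pairMatrix P Q).det = 1 ↔ P.det = 1 ∧ Q.det = 1 := by
  rw [det_pairMatrix, Prod.mk_eq_one]

theorem swapConjTranspose_pairMatrix (P Q : Matrix m n R) :
    swapConjTranspose (pairMatrix P Q) = pairMatrix Qᵀ Pᵀ :=
  rfl

theorem eq_swapConjTranspose_iff_exists_pairMatrix {C : Matrix n n (R × R)} :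
    C = swapConjTranspose C ↔ ∃ P, C = pairMatrix P Pᵀ := by
  obtain ⟨P, Q, rfl⟩ := exists_eq_pairMatrix C
  simp_rw [swapConjTranspose_pairMatrix, pairMatrix_inj]
  constructor
  · rintro ⟨-, hQ⟩
    exact ⟨P, rfl, hQ⟩
  · rintro ⟨_, rfl, rfl⟩
    exact ⟨(transpose_transpose P).symm, rfl⟩

theorem pairMatrix_mul_swapConjTranspose [Fintype n] [NonUnitalCommSemiring R]
    (P Q : Matrix m n R) :
    pairMatrix P Q * swapConjTranspose (pairMatrix P Q) = pairMatrix (P * Qᵀ) (P * Qᵀ)ᵀ := by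
  rw [swapConjTranspose_pairMatrix, pairMatrix_mul, transpose_mul, transpose_transpose]

theorem stmt7_general [Fintype n] [DecidableEq n] [CommRing R] :
    {C : Matrix n n (R × R) | C = swapConjTranspose C ∧ C.det = 1} =
      {M | ∃ B : Matrix n n (R × R), B.det = 1 ∧ M = B * swapConjTranspose B} := by
  ext C
  constructor
  · rintro ⟨hC, hdet⟩
    obtain ⟨P, rfl⟩ := eq_swapConjTranspose_iff_exists_pairMatrix.mp hC
    have hP : P.det = 1 := (det_pairMatrix_eq_one_iff.mp hdet).1
    refine ⟨pairMatrix P 1, det_pairMatrix_eq_one_iff.mpr ⟨hP, det_one⟩, ?_⟩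
    rw [pairMatrix_mul_swapConjTranspose, transpose_one, mul_one]
  · rintro ⟨B, hB, rfl⟩
    obtain ⟨P, Q, rfl⟩ := exists_eq_pairMatrix B
    obtain ⟨hP, hQ⟩ := det_pairMatrix_eq_one_iff.mp hB
    have hPQ : (P * Qᵀ).det = 1 := by rw [det_mul, det_transpose, hP, hQ, one_mul]
    rw [pairMatrix_mul_swapConjTranspose]
    exact ⟨eq_swapConjTranspose_iff_exists_pairMatrix.mpr ⟨_, rfl⟩,
      det_pairMatrix_eq_one_iff.mpr ⟨hPQ, (det_transpose _).trans hPQ⟩⟩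

end PairMatrix

/-- `{C ∈ Herm₂(𝒜) : det C = 1} = {B·B* : B ∈ SL₂(𝒜)}`
(the Anti-de Sitter space `ℍ^{2,1}` under the identification `ℝ^{2,2} ≅ (Herm₂(𝒜), -det)`). -/
theorem stmt7 :
    {C : M2A | C ∈ Herm2 ∧ C.det = 1} = {M : M2A | ∃ B ∈ SL2A, M = B * ctrans B} :=
  stmt7_general
end
end

section
/- For every C ∈ Herm₂(𝒜) there exists a unique C₁ ∈ M₂(ℝ) such that C = ((1+σ)/2)·C₁ + ((1−σ)/2)·C₁ᵗ, and moreover det C = det C₁ (viewed in ℝ ⊂ 𝒜). Consequently, the map C ↦ C₁ is a bijection from Herm₂(𝒜) onto M₂(ℝ) which restricts to a bijection from {C ∈ Herm₂(𝒜) : det C = 1} onto SL₂(ℝ). -/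
noncomputable section

/-- `C₁ ↦ ((1+σ)/2)·C₁ + ((1-σ)/2)·C₁ᵗ`, from `M₂(ℝ)` to `M₂(𝒜)`. -/
def decompM (C₁ : Matrix (Fin 2) (Fin 2) ℝ) : M2A := eP • mR C₁ + eM • mR C₁.transpose

/-! The idempotents `(1 ± σ)/2` split `𝒜` as `ℝ × ℝ`, and conjugation exchanges the two factors.
Over any commutative ring `R`, a matrix over `R × R` is a pair `(A, B)` of matrices over `R`, on
which conjugate transposition acts by `(A, B) ↦ (Bᵀ, Aᵀ)`. So a Hermitian matrix is a pair `(A, Aᵀ)`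
with `A` arbitrary, and its determinant `(det A, det Aᵀ)` is the scalar `det A`. -/

section SwapHermitian

open Matrix

/-- `Hermₙ(R × R)`, the matrices over `R × R` that are Hermitian for the involution exchanging the
two factors. Over `ℝ × ℝ`, the Lorentz numbers in split coordinates, this involution is
`u + σv ↦ u - σv`. -/
def swapHermitian (n R : Type*) : Set (Matrix n n (R × R)) := {C | C = (C.map Prod.swap)ᵀ}

variable {n R : Type*}

theorem mem_swapHermitian_iff {C : Matrix n n (R × R)} :
    C ∈ swapHermitian n R ↔ C.map Prod.snd = (C.map Prod.fst)ᵀ := by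
  simp only [swapHermitian, Set.mem_ofPred_eq, ← Matrix.ext_iff, transpose_apply, map_apply,
    Prod.ext_iff, Prod.fst_swap, Prod.snd_swap]
  exact ⟨fun h i j => (h i j).2, fun h i j => ⟨(h j i).symm, h i j⟩⟩

theorem det_eq_prodMk [Fintype n] [DecidableEq n] {S : Type*} [CommRing R] [CommRing S]
    (C : Matrix n n (R × S)) : C.det = ((C.map Prod.fst).det, (C.map Prod.snd).det) :=
  Prod.ext ((RingHom.fst R S).map_det C) ((RingHom.snd R S).map_det C)

section CommSemiring

variable [CommSemiring R]

/-- The matrix `e₊A + e₋Aᵀ` over `R × R`, where `e₊ = (1, 0)` and `e₋ = (0, 1)` are the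
complementary idempotents. In split coordinates on the Lorentz numbers these are `(1 + σ)/2` and
`(1 - σ)/2`, but the pairs make sense without dividing by `2`. -/
def hermitianLift (A : Matrix n n R) : Matrix n n (R × R) :=
  ((1, 0) : R × R) • A.map (algebraMap R (R × R)) +
    ((0, 1) : R × R) • Aᵀ.map (algebraMap R (R × R))

theorem map_fst_hermitianLift (A : Matrix n n R) : (hermitianLift A).map Prod.fst = A := by
  ext i j
  simp [hermitianLift]

theorem map_snd_hermitianLift (A : Matrix n n R) : (hermitianLift A).map Prod.snd = Aᵀ := by
  ext i j
  simp [hermitianLift]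

theorem hermitianLift_mem_swapHermitian (A : Matrix n n R) :
    hermitianLift A ∈ swapHermitian n R := by
  rw [mem_swapHermitian_iff, map_fst_hermitianLift, map_snd_hermitianLift]

theorem hermitianLift_injective :
    Function.Injective (hermitianLift : Matrix n n R → Matrix n n (R × R)) :=
  fun A B h => by rw [← map_fst_hermitianLift A, h, map_fst_hermitianLift]

theorem hermitianLift_map_fst_of_mem {C : Matrix n n (R × R)} (hC : C ∈ swapHermitian n R) :
    hermitianLift (C.map Prod.fst) = C := by
  ext i j
  · exact congr_fun₂ (map_fst_hermitianLift (C.map Prod.fst)) i j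
  · exact congr_fun₂ ((map_snd_hermitianLift _).trans (mem_swapHermitian_iff.mp hC).symm) i j

theorem bijOn_hermitianLift :
    Set.BijOn (hermitianLift : Matrix n n R → _) Set.univ (swapHermitian n R) :=
  ⟨fun A _ => hermitianLift_mem_swapHermitian A, hermitianLift_injective.injOn,
    fun _ hC => ⟨_, Set.mem_univ _, hermitianLift_map_fst_of_mem hC⟩⟩

theorem existsUnique_eq_hermitianLift {C : Matrix n n (R × R)} (hC : C ∈ swapHermitian n R) :
    ∃! A : Matrix n n R, C = hermitianLift A :=
  ⟨C.map Prod.fst, (hermitianLift_map_fst_of_mem hC).symm,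
    fun A hA => by rw [hA, map_fst_hermitianLift]⟩

end CommSemiring

section Det

variable [Fintype n] [DecidableEq n] [CommRing R]

theorem det_hermitianLift (A : Matrix n n R) :
    (hermitianLift A).det = algebraMap R (R × R) A.det := by
  rw [det_eq_prodMk, map_fst_hermitianLift, map_snd_hermitianLift, det_transpose]
  rfl

theorem det_hermitianLift_eq_one_iff {A : Matrix n n R} :
    (hermitianLift A).det = 1 ↔ A.det = 1 := by
  rw [det_hermitianLift, Prod.algebraMap_apply, Prod.mk_eq_one, Algebra.algebraMap_self_apply,
    and_self]

theorem bijOn_hermitianLift_det_eq_one :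
    Set.BijOn (hermitianLift : Matrix n n R → _) {A | A.det = 1}
      {C | C ∈ swapHermitian n R ∧ C.det = 1} := by
  have preimage_eq : Set.univ ∩ hermitianLift ⁻¹' {C | C ∈ swapHermitian n R ∧ C.det = 1} =
      {A : Matrix n n R | A.det = 1} := by
    ext A
    simp [hermitianLift_mem_swapHermitian, det_hermitianLift_eq_one_iff]
  exact preimage_eq ▸ bijOn_hermitianLift.subset_right fun _ hC => hC.1

end Det

end SwapHermitian

theorem eP_eq : eP = (1, 0) := by
  ext <;> norm_num [eP, sA]

theorem eM_eq : eM = (0, 1) := by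
  ext <;> norm_num [eM, sA]

theorem toA_eq_algebraMap : toA = algebraMap ℝ LorentzA := rfl

theorem Herm2_eq_swapHermitian : Herm2 = swapHermitian (Fin 2) ℝ := rfl

theorem decompM_eq_hermitianLift : decompM = hermitianLift := by
  funext A
  rw [decompM, mR, mR, eP_eq, eM_eq, toA_eq_algebraMap]
  rfl

theorem stmt9_general (n R : Type*) [Fintype n] [DecidableEq n] [CommRing R] :
    (∀ C ∈ swapHermitian n R, ∃! A : Matrix n n R, C = hermitianLift A) ∧
    (∀ A : Matrix n n R, (hermitianLift A).det = algebraMap R (R × R) A.det) ∧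
    Set.BijOn hermitianLift Set.univ (swapHermitian n R) ∧
    Set.BijOn hermitianLift {A : Matrix n n R | A.det = 1}
      {C | C ∈ swapHermitian n R ∧ C.det = 1} :=
  ⟨fun _ => existsUnique_eq_hermitianLift, det_hermitianLift, bijOn_hermitianLift,
    bijOn_hermitianLift_det_eq_one⟩

/-- Every `C ∈ Herm₂(𝒜)` can be written uniquely as
`C = ((1+σ)/2)·C₁ + ((1-σ)/2)·C₁ᵗ` with `C₁ ∈ M₂(ℝ)`, and `det C = det C₁`; consequently
`C₁ ↦ C` is a bijection `M₂(ℝ) → Herm₂(𝒜)` restricting to a bijection from `SL₂(ℝ)` onto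
`{C ∈ Herm₂(𝒜) : det C = 1}`. -/
theorem stmt9 :
    (∀ C ∈ Herm2, ∃! C₁ : Matrix (Fin 2) (Fin 2) ℝ, C = decompM C₁) ∧
    (∀ C₁ : Matrix (Fin 2) (Fin 2) ℝ, (decompM C₁).det = toA C₁.det) ∧
    Set.BijOn decompM Set.univ Herm2 ∧
    Set.BijOn decompM {C₁ : Matrix (Fin 2) (Fin 2) ℝ | C₁.det = 1}
      {C : M2A | C ∈ Herm2 ∧ C.det = 1} := by
  rw [decompM_eq_hermitianLift, Herm2_eq_swapHermitian, toA_eq_algebraMap]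
  exact stmt9_general (Fin 2) ℝ
end
end
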